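/- For $\beta\in\mathbb R$ let $w(x):=(1-x^2)^{\beta}$ and $\varphi(x):=(1-x^2)^{1/2}$ on $[-1,1]$; $\|\cdot\|_{\infty}$ is the essential supremum norm on $[-1,1]$. For $f:[-1,1]\to\mathbb R$ and $h\ge 0$ put $$\Delta_h^2(f,x):=f(x-h)-2f(x)+f(x+h)\ \text{ if } x\pm h\in[-1,1],\qquad \Delta_h^2(f,x):=0\ \text{ otherwise},$$ $\overrightarrow{\Delta}{}_h^2(f,x):=\Delta_h^2(f,x+h)$ and $\overleftarrow{\Delta}{}_h^2(f,x):=\Delta_h^2(f,x-h)$. For $\delta>0$ and $1<q<\infty$ the weighted Ditzian–Totik modulus is $$\omega_\varphi^2(f,\delta)_{w,q}:=\sup_{0<h\le\delta}\bigl\|w\,\Delta^2_{h\varphi(\cdot)}(f,\cdot)\bigr\|_{L^q[-1+8h^2,\,1-8h^2]}+\sup_{0<h\le 8\delta^2}\bigl\|w\,\overrightarrow{\Delta}{}^2_h(f,\cdot)\bigr\|_{L^q[-1,\,-1+8\delta^2]}+\sup_{0<h\le 8\delta^2}\bigl\|w\,\overleftarrow{\Delta}{}^2_h(f,\cdot)\bigr\|_{L^q[1-8\delta^2,\,1]}$$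 (a norm over an empty interval being $0$). Let $\beta\in\mathbb R$ and $1<q<\infty$. Then there is a constant $c>0$, depending only on $q$ and $\beta$, such that for every measurable $f:[-1,1]\to\mathbb R$ that is convex on $(-1,1)$, vanishes on $(-1,0]$ and satisfies $\|wf\|_\infty<\infty$, and for every $0<\delta\le 1/4$, $$\omega_\varphi^2(f,\delta)_{w,q}\le c\,\delta^{2/q}\,\|wf\|_\infty .$$ -/

import Mathlib

open MeasureTheory Set
open scoped ENNReal

noncomputable section

/-- The Jacobi weight `w_{α,β}(x) = (1+x)^α (1-x)^β`. -/
def jacobi (α β : ℝ) (x : ℝ) : ℝ := (1 + x) ^ α * (1 - x) ^ β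

/-- `φ(x) = √(1-x²)`. -/
def phiW (x : ℝ) : ℝ := Real.sqrt (1 - x ^ 2)

/-- The `L^p` norm of `g` on the interval `[a,b]` (essential sup when `p = ∞`; zero when
the interval is empty). -/
def LpOn (g : ℝ → ℝ) (p : ℝ≥0∞) (a b : ℝ) : ℝ≥0∞ :=
  eLpNorm g p (volume.restrict (Icc a b))

/-- The `k`-th symmetric difference `Δ_h^k(f,x)` relative to `[-1,1]`. -/
def symmDelta (k : ℕ) (h : ℝ) (f : ℝ → ℝ) (x : ℝ) : ℝ :=
  if (x - k * h / 2 ∈ Icc (-1 : ℝ) 1 ∧ x + k * h / 2 ∈ Icc (-1 : ℝ) 1) then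
    ∑ i ∈ Finset.range (k + 1), ((k.choose i : ℝ) * (-1 : ℝ) ^ (k - i) * f (x - k * h / 2 + i * h))
  else 0

/-- Main-part weighted modulus `Ω_φ^k(f,δ)_{w,p}`. -/
def OmegaMain (k : ℕ) (f : ℝ → ℝ) (δ : ℝ) (wt : ℝ → ℝ) (p : ℝ≥0∞) : ℝ≥0∞ :=
  ⨆ h ∈ Ioc (0 : ℝ) δ,
    LpOn (fun x => wt x * symmDelta k (h * phiW x) f x) p
      (-1 + 2 * (k : ℝ) ^ 2 * h ^ 2) (1 - 2 * (k : ℝ) ^ 2 * h ^ 2)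

/-- Forward part `Ω→_φ^k(f,δ)_{w,p}`. -/
def OmegaFwd (k : ℕ) (f : ℝ → ℝ) (δ : ℝ) (wt : ℝ → ℝ) (p : ℝ≥0∞) : ℝ≥0∞ :=
  ⨆ h ∈ Ioc (0 : ℝ) (2 * (k : ℝ) ^ 2 * δ ^ 2),
    LpOn (fun x => wt x * symmDelta k h f (x + k * h / 2)) p
      (-1) (-1 + 2 * (k : ℝ) ^ 2 * δ ^ 2)

/-- Backward part `Ω←_φ^k(f,δ)_{w,p}`. -/
def OmegaBwd (k : ℕ) (f : ℝ → ℝ) (δ : ℝ) (wt : ℝ → ℝ) (p : ℝ≥0∞) : ℝ≥0∞ :=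
  ⨆ h ∈ Ioc (0 : ℝ) (2 * (k : ℝ) ^ 2 * δ ^ 2),
    LpOn (fun x => wt x * symmDelta k h f (x - k * h / 2)) p
      (1 - 2 * (k : ℝ) ^ 2 * δ ^ 2) 1

/-- Weighted Ditzian–Totik modulus `ω_φ^k(f,δ)_{w,p}`. -/
def omegaDT (k : ℕ) (f : ℝ → ℝ) (δ : ℝ) (wt : ℝ → ℝ) (p : ℝ≥0∞) : ℝ≥0∞ :=
  OmegaMain k f δ wt p + OmegaFwd k f δ wt p + OmegaBwd k f δ wt p

/-- `f` is `k`-monotone on `(-1,1)`: all `k`-th divided differences over `k+1` distinct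
points of `(-1,1)` are nonnegative. -/
def kMonotoneOn (k : ℕ) (f : ℝ → ℝ) : Prop :=
  ∀ x : Fin (k + 1) → ℝ, Function.Injective x → (∀ i, x i ∈ Ioo (-1 : ℝ) 1) →
    0 ≤ ∑ i, f (x i) / ∏ j ∈ Finset.univ.erase i, (x i - x j)

/-- `M_+^k`, the `k`-monotone functions on `(-1,1)` vanishing on `(-1,0]`. -/
def MPlus (k : ℕ) : Set (ℝ → ℝ) :=
  {f | kMonotoneOn k f ∧ ∀ x : ℝ, -1 < x → x ≤ 0 → f x = 0}

/-- `W_p^{α,β}`: the functions that are (Lebesgue) measurable on `[-1,1]` with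
`‖w_{α,β} f‖_p < ∞`. Functions on `[-1,1]` are represented by functions on `ℝ`; values outside
`[-1,1]` play no role in any of the definitions. -/
def WSet (p : ℝ≥0∞) (α β : ℝ) : Set (ℝ → ℝ) :=
  {f | AEMeasurable f (volume.restrict (Icc (-1 : ℝ) 1)) ∧
    LpOn (fun x => jacobi α β x * f x) p (-1) 1 < ∞}

end

/-- The extension of a function on `(-1,1)` that vanishes on `(-1,0]` by zero to `(-∞,0]`. -/
noncomputable def zeroLeft (f : ℝ → ℝ) (x : ℝ) : ℝ := if x ≤ 0 then 0 else f x

theorem zeroLeft_of_nonpos (f : ℝ → ℝ) {x : ℝ} (hx : x ≤ 0) : zeroLeft f x = 0 := if_pos hx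

theorem zeroLeft_of_pos (f : ℝ → ℝ) {x : ℝ} (hx : 0 < x) : zeroLeft f x = f x :=
  if_neg (not_le.2 hx)

theorem kMonotoneOn_two_three_point {f : ℝ → ℝ} (hf : kMonotoneOn 2 f) {a b c : ℝ} (ha : -1 < a)
    (hab : a < b) (hbc : b < c) (hc : c < 1) :
    f b * (c - a) ≤ f a * (c - b) + f c * (b - a) := by
  have h := hf ![a, b, c] (by
    intro i j hij
    fin_cases i <;> fin_cases j <;> simp at hij ⊢ <;> linarith) (by
    intro i
    fin_cases i <;> simp <;> constructor <;> linarith)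
  have e0 : (Finset.univ.erase (0 : Fin 3)) = {1, 2} := by decide
  have e1 : (Finset.univ.erase (1 : Fin 3)) = {0, 2} := by decide
  have e2 : (Finset.univ.erase (2 : Fin 3)) = {0, 1} := by decide
  rw [Fin.sum_univ_three, e0, e1, e2] at h
  simp at h
  have h1 : 0 < b - a := by linarith
  have h2 : 0 < c - b := by linarith
  have h3 : 0 < c - a := by linarith
  have key : (f a / ((a - b) * (a - c)) + f b / ((b - a) * (b - c)) + f c / ((c - a) * (c - b)))
      * ((b - a) * (c - b) * (c - a)) = f a * (c - b) + f c * (b - a) - f b * (c - a) := by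
    have n1 : a - b ≠ 0 := by linarith
    have n2 : a - c ≠ 0 := by linarith
    have n3 : b - c ≠ 0 := by linarith
    field_simp
    ring
  have := mul_nonneg h (by positivity : 0 ≤ (b - a) * (c - b) * (c - a))
  rw [key] at this
  linarith

theorem zeroLeft_nonneg {f : ℝ → ℝ} (hf : f ∈ MPlus 2) {x : ℝ} (hx : x < 1) :
    0 ≤ zeroLeft f x := by
  rcases le_or_gt x 0 with h | h
  · rw [zeroLeft_of_nonpos f h]
  · rw [zeroLeft_of_pos f h]
    have := kMonotoneOn_two_three_point hf.1 (a := -1 / 2) (b := 0) (by norm_num) (by norm_num) h hx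
    rw [hf.2 (-1 / 2) (by norm_num) (by norm_num), hf.2 0 (by norm_num) le_rfl] at this
    linarith

theorem zeroLeft_eq {f : ℝ → ℝ} (hf : f ∈ MPlus 2) {x : ℝ} (hx : -1 < x) :
    zeroLeft f x = f x := by
  rcases le_or_gt x 0 with h | h
  · rw [zeroLeft_of_nonpos f h, hf.2 x hx h]
  · rw [zeroLeft_of_pos f h]

theorem zeroLeft_monotoneOn {f : ℝ → ℝ} (hf : f ∈ MPlus 2) : MonotoneOn (zeroLeft f) (Iio 1) := by
  intro b hb c hc hbc
  rcases le_or_gt b 0 with h | h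
  · rw [zeroLeft_of_nonpos f h]; exact zeroLeft_nonneg hf hc
  rcases hbc.eq_or_lt with rfl | hbc
  · exact le_rfl
  have h0 := zeroLeft_nonneg hf hc
  rw [zeroLeft_of_pos f (h.trans hbc)] at h0
  rw [zeroLeft_of_pos f h, zeroLeft_of_pos f (h.trans hbc)]
  have := kMonotoneOn_two_three_point hf.1 (a := 0) (by norm_num) h hbc hc
  rw [hf.2 0 (by norm_num) le_rfl] at this
  nlinarith

theorem zeroLeft_three_point {f : ℝ → ℝ} (hf : f ∈ MPlus 2) {a b c : ℝ}
    (hab : a < b) (hbc : b < c) (hc : c < 1) :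
    zeroLeft f b * (c - a) ≤ zeroLeft f a * (c - b) + zeroLeft f c * (b - a) := by
  have hm := zeroLeft_monotoneOn hf (hbc.trans hc) hc hbc.le
  have h0 := zeroLeft_nonneg hf hc
  rcases le_or_gt b 0 with hb | hb
  · rw [zeroLeft_of_nonpos f hb, zeroLeft_of_nonpos f (hab.le.trans hb)]
    nlinarith
  rcases le_or_gt a 0 with ha | ha
  · have := kMonotoneOn_two_three_point hf.1 (a := 0) (by norm_num) hb hbc hc
    rw [hf.2 0 (by norm_num) le_rfl] at this
    rw [zeroLeft_of_nonpos f ha]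
    rw [zeroLeft_of_pos f hb, zeroLeft_of_pos f (hb.trans hbc)] at *
    nlinarith
  · rw [zeroLeft_of_pos f ha, zeroLeft_of_pos f hb, zeroLeft_of_pos f (hb.trans hbc)]
    exact kMonotoneOn_two_three_point hf.1 (by linarith) hab hbc hc

theorem zeroLeft_convexOn {f : ℝ → ℝ} (hf : f ∈ MPlus 2) : ConvexOn ℝ (Iio 1) (zeroLeft f) := by
  refine convexOn_of_slope_mono_adjacent (convex_Iio 1) ?_
  intro a b c _ hc hab hbc
  have := zeroLeft_three_point hf hab hbc hc
  rw [div_le_div_iff₀ (by linarith) (by linarith)]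
  nlinarith

/-- The second symmetric difference of a convex function grows with the step. -/
theorem ConvexOn.symm_sum_le {g : ℝ → ℝ} (hg : ConvexOn ℝ (Iio 1) g) {x s S : ℝ} (hs : 0 ≤ s)
    (hsS : s ≤ S) (hx : x + S < 1) : g (x - s) + g (x + s) ≤ g (x - S) + g (x + S) := by
  rcases hs.eq_or_lt with rfl | hs
  · have m : x - S ∈ Iio (1 : ℝ) := by simp only [mem_Iio]; linarith
    have := hg.2 m hx one_half_pos.le one_half_pos.le (add_halves 1)
    simp only [smul_eq_mul] at this
    rw [show (1 / 2 : ℝ) * (x - S) + 1 / 2 * (x + S) = x by ring] at this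
    simp only [sub_zero, add_zero]
    linarith
  have hS : 0 < S := hs.trans_le hsS
  have p1 : 0 ≤ (S + s) / (2 * S) := by positivity
  have p2 : 0 ≤ (S - s) / (2 * S) := div_nonneg (by linarith) (by positivity)
  have m : x - S ∈ Iio (1 : ℝ) := by simp only [mem_Iio]; linarith
  have h1 := hg.2 m hx p1 p2 (by field_simp; ring)
  have h2 := hg.2 m hx p2 p1 (by field_simp; ring)
  simp only [smul_eq_mul] at h1 h2
  rw [show (S + s) / (2 * S) * (x - S) + (S - s) / (2 * S) * (x + S) = x - s by
    field_simp; ring] at h1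
  rw [show (S - s) / (2 * S) * (x - S) + (S + s) / (2 * S) * (x + S) = x + s by
    field_simp; ring] at h2
  have e : (S + s) / (2 * S) + (S - s) / (2 * S) = 1 := by field_simp; ring
  have e' : (S - s) / (2 * S) = 1 - (S + s) / (2 * S) := by linarith
  rw [e'] at h1 h2
  linarith

/-- An increment of a nonnegative convex function is controlled by its value further right. -/
theorem ConvexOn.sub_le_of_nonneg {g : ℝ → ℝ} (hg : ConvexOn ℝ (Iio 1) g)
    (h0 : ∀ x < 1, 0 ≤ g x) {y S T : ℝ} (hS : 0 < S) (hT : 0 < T) (hy : y + S ≤ 1 - T / 4) :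
    g (y + S) - g y ≤ 8 * (S / T) * g (1 - T / 8) := by
  have h := hg.slope_mono_adjacent (x := y) (y := y + S) (z := 1 - T / 8)
    (by simp only [mem_Iio]; linarith) (by simp only [mem_Iio]; linarith) (by linarith)
    (by linarith)
  have n := h0 (y + S) (by linarith)
  have nz := h0 (1 - T / 8) (by linarith)
  have h2 : (g (1 - T / 8) - g (y + S)) / (1 - T / 8 - (y + S)) ≤ g (1 - T / 8) / (T / 8) :=
    div_le_div₀ nz (by linarith) (by positivity) (by linarith)
  have h3 := h.trans h2
  rw [add_sub_cancel_left, div_le_iff₀ hS] at h3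
  refine h3.trans (le_of_eq ?_)
  field_simp

theorem MonotoneOn.intervalIntegrable_Iio {g : ℝ → ℝ} (hm : MonotoneOn g (Iio 1)) {a b : ℝ}
    (ha : a < 1) (hb : b < 1) : IntervalIntegrable g volume a b :=
  (hm.mono fun _ hx => lt_of_le_of_lt hx.2 (max_lt ha hb)).intervalIntegrable

theorem intervalIntegrable_symm_diff {g : ℝ → ℝ} (hm : MonotoneOn g (Iio 1)) {a b S : ℝ}
    (hS : 0 ≤ S) (hab : a ≤ b) (hb : b + S < 1) :
    IntervalIntegrable (fun x => g (x - S) - 2 * g x + g (x + S)) volume a b := by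
  have i0 := hm.intervalIntegrable_Iio (a := a) (b := b) (by linarith) (by linarith)
  have i1 := (hm.intervalIntegrable_Iio (a := a + S) (b := b + S) (by linarith) hb).comp_add_right S
  have i2 := (hm.intervalIntegrable_Iio (a := a - S) (b := b - S) (by linarith)
    (by linarith)).comp_sub_right S
  simp only [add_sub_cancel_right, sub_add_cancel] at i1 i2
  exact (i2.sub (i0.const_mul 2)).add i1

theorem integral_symm_diff_le {g : ℝ → ℝ} (hg : ConvexOn ℝ (Iio 1) g) (hm : MonotoneOn g (Iio 1))
    {a b S : ℝ} (hS : 0 < S) (hab : a ≤ b) (hb : b + S < 1) :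
    ∫ x in a..b, (g (x - S) - 2 * g x + g (x + S)) ≤ S * (g (b + S) - g b) := by
  set D : ℝ → ℝ := fun x => g (x + S) - g x with hD
  have iD : ∀ u v, u ≤ b → v ≤ b → IntervalIntegrable D volume u v := by
    intro u v hu hv
    have i1 := (hm.intervalIntegrable_Iio (a := u + S) (b := v + S) (by linarith)
      (by linarith)).comp_add_right S
    simp only [add_sub_cancel_right] at i1
    exact i1.sub (hm.intervalIntegrable_Iio (by linarith) (by linarith))
  have e1 : ∫ x in a..b, (g (x - S) - 2 * g x + g (x + S))
      = (∫ x in a..b, D x) - ∫ x in (a - S)..(b - S), D x := by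
    rw [← intervalIntegral.integral_comp_sub_right, ← intervalIntegral.integral_sub]
    · refine intervalIntegral.integral_congr fun x _ => ?_
      simp only [hD, sub_add_cancel]; ring
    · exact iD _ _ hab le_rfl
    · have := (iD (a - S) (b - S) (by linarith) (by linarith)).comp_sub_right S
      simpa only [sub_add_cancel] using this
  have e2 : (∫ x in a..b, D x) - ∫ x in (a - S)..(b - S), D x
      = (∫ x in (b - S)..b, D x) - ∫ x in (a - S)..a, D x := by
    have j1 := intervalIntegral.integral_add_adjacent_intervals
      (iD (a - S) a (by linarith) hab) (iD a b hab le_rfl)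
    have j2 := intervalIntegral.integral_add_adjacent_intervals
      (iD (a - S) (b - S) (by linarith) (by linarith)) (iD (b - S) b (by linarith) le_rfl)
    linarith
  have p : 0 ≤ ∫ x in (a - S)..a, D x := by
    refine intervalIntegral.integral_nonneg (by linarith) fun x hx => sub_nonneg.2 ?_
    exact hm (by simp only [mem_Iio]; linarith [hx.2]) (by simp only [mem_Iio]; linarith [hx.2])
      (by linarith)
  have u : ∫ x in (b - S)..b, D x ≤ ∫ _ in (b - S)..b, D b := by
    refine intervalIntegral.integral_mono_on (by linarith) (iD _ _ (by linarith) le_rfl)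
      intervalIntegrable_const fun x hx => ?_
    have s := hg.symm_sum_le (x := (x + b + S) / 2) (s := |b - x - S| / 2) (S := (b + S - x) / 2)
      (by positivity) (by
        have := abs_le.2 (⟨by linarith [hx.2], by linarith [hx.1]⟩ :
          -(b + S - x) ≤ b - x - S ∧ b - x - S ≤ b + S - x)
        linarith) (by linarith [hx.2])
    rw [show (x + b + S) / 2 - (b + S - x) / 2 = x by ring,
      show (x + b + S) / 2 + (b + S - x) / 2 = b + S by ring] at s
    rcases abs_cases (b - x - S) with ⟨h, _⟩ | ⟨h, _⟩ <;> rw [h] at s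
    · rw [show (x + b + S) / 2 - (b - x - S) / 2 = x + S by ring,
        show (x + b + S) / 2 + (b - x - S) / 2 = b by ring] at s
      simp only [hD]; linarith
    · rw [show (x + b + S) / 2 - -(b - x - S) / 2 = b by ring,
        show (x + b + S) / 2 + -(b - x - S) / 2 = x + S by ring] at s
      simp only [hD]; linarith
  rw [intervalIntegral.integral_const, sub_sub_cancel, smul_eq_mul] at u
  rw [e1, e2]
  simp only [hD] at u p ⊢
  linarith

theorem rpow_le_of_comparable {a b L : ℝ} (β : ℝ) (ha : 0 < a) (hb : 0 < b) (hab : a ≤ L * b)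
    (hba : b ≤ L * a) : a ^ β ≤ L ^ |β| * b ^ β := by
  have hL : 0 ≤ L := by
    by_contra h
    nlinarith
  rcases le_total 0 β with h | h
  · rw [abs_of_nonneg h, ← Real.mul_rpow hL hb.le]
    exact Real.rpow_le_rpow ha.le hab h
  · have hL' : 0 < L := hL.lt_of_ne (by rintro rfl; linarith)
    rw [abs_of_nonpos h, Real.rpow_neg hL, ← Real.inv_rpow hL, ← Real.mul_rpow (by positivity) hb.le]
    refine Real.rpow_le_rpow_of_nonpos (by positivity) ?_ h
    rw [inv_mul_le_iff₀ hL']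
    exact hba

theorem jacobi_mul_le_of_mem_Ioo {f : ℝ → ℝ} {β : ℝ} (hf : f ∈ MPlus 2 ∩ WSet ∞ β β) {z : ℝ}
    (hz : z ∈ Ioo (0 : ℝ) 1) :
    jacobi β β z * f z ≤ (LpOn (fun x => jacobi β β x * f x) ∞ (-1) 1).toReal := by
  set N := LpOn (fun x => jacobi β β x * f x) ∞ (-1) 1 with hN
  have hfin : N ≠ ∞ := hf.2.2.ne
  have hae : ∀ᵐ x ∂(volume.restrict (Icc (-1 : ℝ) 1)), ‖jacobi β β x * f x‖ₑ ≤ N := by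
    rw [hN, LpOn, eLpNorm_exponent_top]
    exact ae_le_eLpNormEssSup
  by_contra! hlt
  have hcont : ContinuousAt (fun x => jacobi β β x * zeroLeft f x) z := by
    refine ContinuousAt.mul ?_ ?_
    · refine ContinuousAt.mul ?_ ?_
      · exact (by fun_prop : ContinuousAt (fun x : ℝ => 1 + x) z).rpow_const
          (Or.inl (by linarith [hz.1]))
      · exact (by fun_prop : ContinuousAt (fun x : ℝ => 1 - x) z).rpow_const
          (Or.inl (by linarith [hz.2]))
    · exact ((zeroLeft_convexOn hf.1).continuousOn isOpen_Iio).continuousAt (Iio_mem_nhds hz.2)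
  have hev : ∀ᶠ x in nhds z, N.toReal < jacobi β β x * zeroLeft f x := by
    refine hcont.eventually_const_lt ?_
    simpa only [zeroLeft_of_pos f hz.1] using hlt
  have hmem : {x | N.toReal < jacobi β β x * f x} ∩ Ioo 0 1 ∈ nhds z := by
    filter_upwards [hev, Ioo_mem_nhds hz.1 hz.2] with x hx hx'
    rw [zeroLeft_of_pos f hx'.1] at hx
    exact ⟨hx, hx'⟩
  have hpos := Measure.measure_pos_of_mem_nhds volume hmem
  refine hpos.ne' (measure_mono_null ?_ ((ae_restrict_iff' measurableSet_Icc).1 hae))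
  intro x hx h
  have h1 := h ⟨by linarith [hx.2.1], hx.2.2.le⟩
  have h2 := ENNReal.toReal_mono hfin h1
  rw [toReal_enorm] at h2
  exact absurd (hx.1.trans_le ((Real.le_norm_self _).trans h2)) (lt_irrefl _)

theorem zeroLeft_mul_rpow_le {f : ℝ → ℝ} {β : ℝ} (hf : f ∈ MPlus 2 ∩ WSet ∞ β β) {z : ℝ}
    (hz : z < 1) :
    zeroLeft f z * (1 - z) ^ β ≤
      2 ^ |β| * (LpOn (fun x => jacobi β β x * f x) ∞ (-1) 1).toReal := by
  rcases le_or_gt z 0 with h | h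
  · rw [zeroLeft_of_nonpos f h, zero_mul]
    positivity
  have hj := jacobi_mul_le_of_mem_Ioo hf ⟨h, hz⟩
  have h0 := zeroLeft_nonneg hf.1 hz
  rw [zeroLeft_of_pos f h] at h0 ⊢
  have h1 : (1 : ℝ) ≤ 2 ^ |β| * (1 + z) ^ β := by
    have := rpow_le_of_comparable (a := 1) (b := 1 + z) (L := 2) β one_pos (by linarith)
      (by linarith) (by linarith)
    rwa [Real.one_rpow] at this
  have h2 : 0 ≤ f z * (1 - z) ^ β := mul_nonneg h0 (Real.rpow_nonneg (by linarith) _)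
  calc f z * (1 - z) ^ β ≤ (2 ^ |β| * (1 + z) ^ β) * (f z * (1 - z) ^ β) :=
        le_mul_of_one_le_left h2 h1
    _ = 2 ^ |β| * (jacobi β β z * f z) := by rw [jacobi]; ring
    _ ≤ _ := by gcongr

theorem symmDelta_two (h : ℝ) (f : ℝ → ℝ) (x : ℝ) :
    symmDelta 2 h f x = if x - h ∈ Icc (-1 : ℝ) 1 ∧ x + h ∈ Icc (-1 : ℝ) 1 then
      f (x - h) - 2 * f x + f (x + h) else 0 := by
  have e : ((2 : ℕ) : ℝ) * h / 2 = h := by push_cast; ring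
  rw [symmDelta, e]
  congr 1
  simp [Finset.sum_range_succ]
  rw [show x - h + 2 * h = x + h by ring]
  ring

theorem symmDelta_two_eq_zeroLeft {f : ℝ → ℝ} (hf : f ∈ MPlus 2) {x s : ℝ} (hs : 0 ≤ s)
    (h1 : -1 < x - s) (h2 : x + s < 1) :
    symmDelta 2 s f x = zeroLeft f (x - s) - 2 * zeroLeft f x + zeroLeft f (x + s) := by
  rw [symmDelta_two, if_pos ⟨⟨h1.le, by linarith⟩, by linarith, h2.le⟩, zeroLeft_eq hf h1,
    zeroLeft_eq hf (by linarith), zeroLeft_eq hf (by linarith)]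

theorem mul_phiW_le {h x : ℝ} (hx : x ∈ Icc (-1 + 8 * h ^ 2) (1 - 8 * h ^ 2)) :
    h * phiW x ≤ (1 - x) / 2 ∧ h * phiW x ≤ (1 + x) / 2 := by
  have hx1 : 8 * h ^ 2 ≤ 1 - x := by linarith [hx.2]
  have hx2 : 8 * h ^ 2 ≤ 1 + x := by linarith [hx.1]
  have hh := sq_nonneg h
  have hsq : (h * phiW x) ^ 2 = h ^ 2 * ((1 - x) * (1 + x)) := by
    rw [mul_pow, phiW, Real.sq_sqrt (by nlinarith)]; ring
  have n1 : 0 ≤ 1 - x := by linarith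
  have n2 : 0 ≤ 1 + x := by linarith
  have n : 0 ≤ (1 - x) * (1 + x) := mul_nonneg n1 n2
  constructor <;> refine le_of_sq_le_sq ?_ (by linarith) <;> rw [hsq] <;> nlinarith

theorem OmegaFwd_two_le {f : ℝ → ℝ} {β δ : ℝ} (q : ℝ≥0∞) (hf : f ∈ MPlus 2 ∩ WSet ∞ β β)
    (hδ : 0 < δ) (hδ' : δ ≤ 1 / 4) :
    OmegaFwd 2 f δ (jacobi β β) q ≤ ENNReal.ofReal (8 * δ ^ 2) ^ q.toReal⁻¹ *
      ENNReal.ofReal (16 ^ |β| * (LpOn (fun x => jacobi β β x * f x) ∞ (-1) 1).toReal) := by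
  set M := (LpOn (fun x => jacobi β β x * f x) ∞ (-1) 1).toReal with hM
  have hM0 : 0 ≤ M := ENNReal.toReal_nonneg
  have hδ2 : δ ^ 2 ≤ 1 / 16 := by nlinarith
  refine iSup₂_le fun h hh => ?_
  push_cast at hh ⊢
  have hb := hh.2
  have hpos := hh.1
  rw [show (2 : ℝ) * 2 ^ 2 * δ ^ 2 = 8 * δ ^ 2 by ring] at hb ⊢
  have key : ∀ x ∈ Ioc (-1 : ℝ) (-1 + 8 * δ ^ 2),
      ‖jacobi β β x * symmDelta 2 h f (x + 2 * h / 2)‖ ≤ 16 ^ |β| * M := by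
    intro x hx
    have hx1 := hx.1
    have hx2 := hx.2
    rw [show x + 2 * h / 2 = x + h by ring,
      symmDelta_two_eq_zeroLeft hf.1 hpos.le (by linarith) (by linarith),
      zeroLeft_of_nonpos f (by linarith : x + h - h ≤ 0),
      zeroLeft_of_nonpos f (by linarith : x + h ≤ 0)]
    have h0 := zeroLeft_nonneg hf.1 (show x + h + h < 1 by linarith)
    have hmono : zeroLeft f (x + h + h) ≤ zeroLeft f (1 / 2) :=
      zeroLeft_monotoneOn hf.1 (show x + h + h < 1 by linarith) (show (1 / 2 : ℝ) < 1 by norm_num)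
        (by linarith)
    have hhalf := zeroLeft_mul_rpow_le hf (show (1 / 2 : ℝ) < 1 by norm_num)
    have hw0 : 0 ≤ jacobi β β x :=
      mul_nonneg (Real.rpow_nonneg (by linarith) _) (Real.rpow_nonneg (by linarith) _)
    rw [mul_zero, sub_zero, zero_add, Real.norm_of_nonneg (mul_nonneg hw0 h0)]
    rcases le_or_gt 0 β with hβ | hβ
    · have e1 : (1 + x) ^ β ≤ 2 ^ |β| := by
        rw [abs_of_nonneg hβ]; exact Real.rpow_le_rpow (by linarith) (by linarith) hβ
      have e2 : (1 - x) ^ β ≤ 2 ^ |β| := by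
        rw [abs_of_nonneg hβ]; exact Real.rpow_le_rpow (by linarith) (by linarith) hβ
      have e3 : zeroLeft f (1 / 2) ≤ 2 ^ |β| * (2 ^ |β| * M) := by
        have : (1 : ℝ) ≤ 2 ^ |β| * (1 - 1 / 2) ^ β := by
          rw [abs_of_nonneg hβ, ← Real.mul_rpow (by norm_num) (by norm_num)]
          norm_num
        calc zeroLeft f (1 / 2) ≤ (2 ^ |β| * (1 - 1 / 2) ^ β) * zeroLeft f (1 / 2) :=
              le_mul_of_one_le_left (h0.trans hmono) this
          _ = 2 ^ |β| * (zeroLeft f (1 / 2) * (1 - 1 / 2) ^ β) := by ring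
          _ ≤ _ := by gcongr
      have e4 : (16 : ℝ) ^ |β| = 2 ^ |β| * 2 ^ |β| * (2 ^ |β| * 2 ^ |β|) := by
        rw [← Real.mul_rpow (by norm_num) (by norm_num),
          ← Real.mul_rpow (by norm_num) (by norm_num)]
        norm_num
      calc jacobi β β x * zeroLeft f (x + h + h)
          ≤ (2 ^ |β| * 2 ^ |β|) * (2 ^ |β| * (2 ^ |β| * M)) := by
            refine mul_le_mul ?_ (hmono.trans e3) h0 (by positivity)
            exact mul_le_mul e1 e2 (Real.rpow_nonneg (by linarith) _) (by positivity)
        _ = 16 ^ |β| * M := by rw [e4]; ring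
    · -- for negative exponents the growth bound forces the function to vanish
      have hz : zeroLeft f (1 / 2) ≤ 0 := by
        have ht : Filter.Tendsto (fun t : ℝ => 2 ^ |β| * M * t ^ (-β))
            (nhdsWithin 0 (Ioi 0)) (nhds 0) := by
          have : ContinuousAt (fun t : ℝ => 2 ^ |β| * M * t ^ (-β)) 0 :=
            continuousAt_const.mul (continuousAt_id.rpow_const (Or.inr (by linarith)))
          have h := this.tendsto
          rw [Real.zero_rpow (by linarith), mul_zero] at h
          exact h.mono_left nhdsWithin_le_nhds
        refine ge_of_tendsto ht ?_
        filter_upwards [Ioo_mem_nhdsGT (show (0 : ℝ) < 1 / 2 by norm_num)] with t ht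
        have hg := zeroLeft_mul_rpow_le hf (show 1 - t < 1 by linarith [ht.1])
        rw [sub_sub_cancel, ← hM] at hg
        have hm : zeroLeft f (1 / 2) ≤ zeroLeft f (1 - t) :=
          zeroLeft_monotoneOn hf.1 (show (1 / 2 : ℝ) < 1 by norm_num)
            (show 1 - t < 1 by linarith [ht.1]) (by linarith [ht.2])
        refine hm.trans ?_
        rw [Real.rpow_neg ht.1.le, ← div_eq_mul_inv, le_div_iff₀ (Real.rpow_pos_of_pos ht.1 _)]
        exact hg
      rw [le_antisymm (hmono.trans hz) h0, mul_zero]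
      positivity
  refine (eLpNorm_le_of_ae_bound (C := 16 ^ |β| * M) ?_).trans (le_of_eq ?_)
  · rw [← restrict_Ioc_eq_restrict_Icc]
    exact ae_restrict_of_forall_mem measurableSet_Ioc key
  · rw [Measure.restrict_apply_univ, Real.volume_Icc]
    congr 3
    ring

theorem OmegaBwd_two_le {f : ℝ → ℝ} {β δ : ℝ} (q : ℝ≥0∞) (hf : f ∈ MPlus 2 ∩ WSet ∞ β β)
    (hδ : 0 < δ) (hδ' : δ ≤ 1 / 4) :
    OmegaBwd 2 f δ (jacobi β β) q ≤ ENNReal.ofReal (8 * δ ^ 2) ^ q.toReal⁻¹ *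
      ENNReal.ofReal (LpOn (fun x => jacobi β β x * f x) ∞ (-1) 1).toReal := by
  set M := (LpOn (fun x => jacobi β β x * f x) ∞ (-1) 1).toReal with hM
  have hM0 : 0 ≤ M := ENNReal.toReal_nonneg
  have hδ2 : δ ^ 2 ≤ 1 / 16 := by nlinarith
  refine iSup₂_le fun h hh => ?_
  push_cast at hh ⊢
  have hb := hh.2
  have hpos := hh.1
  rw [show (2 : ℝ) * 2 ^ 2 * δ ^ 2 = 8 * δ ^ 2 by ring] at hb ⊢
  have key : ∀ x ∈ Ico (1 - 8 * δ ^ 2) (1 : ℝ),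
      ‖jacobi β β x * symmDelta 2 h f (x - 2 * h / 2)‖ ≤ M := by
    intro x hx
    have hx1 := hx.1
    have hx2 := hx.2
    have hδ0 : 0 < δ ^ 2 := by positivity
    have hx0 : 0 < x := by linarith
    rw [show x - 2 * h / 2 = x - h by ring,
      symmDelta_two_eq_zeroLeft hf.1 hpos.le (by linarith) (by linarith), sub_add_cancel]
    have hw0 : 0 ≤ jacobi β β x :=
      mul_nonneg (Real.rpow_nonneg (by linarith) _) (Real.rpow_nonneg (by linarith) _)
    have hc := (zeroLeft_convexOn hf.1).symm_sum_le (x := x - h) le_rfl hpos.le (by linarith)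
    rw [sub_zero, add_zero, sub_add_cancel] at hc
    have h0 := zeroLeft_nonneg hf.1 (show x - h < 1 by linarith)
    have hm : zeroLeft f (x - h - h) ≤ zeroLeft f (x - h) :=
      zeroLeft_monotoneOn hf.1 (show x - h - h < 1 by linarith) (show x - h < 1 by linarith)
        (by linarith)
    rw [Real.norm_of_nonneg (mul_nonneg hw0 (by linarith))]
    refine le_trans ?_ (jacobi_mul_le_of_mem_Ioo hf ⟨hx0, hx2⟩)
    rw [← zeroLeft_of_pos f hx0]
    exact mul_le_mul_of_nonneg_left (by linarith) hw0
  refine (eLpNorm_le_of_ae_bound (C := M) ?_).trans (le_of_eq ?_)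
  · rw [← restrict_Ico_eq_restrict_Icc]
    exact ae_restrict_of_forall_mem measurableSet_Ico key
  · rw [Measure.restrict_apply_univ, Real.volume_Icc]
    congr 3
    ring

theorem norm_jacobi_mul_symmDelta_le {f : ℝ → ℝ} {β h x S T : ℝ} (hf : f ∈ MPlus 2) (hh : 0 < h)
    (hx : x ∈ Icc (-1 + 8 * h ^ 2) (1 - 8 * h ^ 2)) (hT : 0 < T) (hS : 0 < S)
    (hST : S ≤ 3 / 4 * T) (hhS : 9 / 2 * (h ^ 2 * T) ≤ S ^ 2)
    (hxT : x ∈ Icc (1 - 9 / 4 * T) (1 - T)) :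
    ‖jacobi β β x * symmDelta 2 (h * phiW x) f x‖ ≤
      6 ^ |β| * T ^ β * (zeroLeft f (x - S) - 2 * zeroLeft f x + zeroLeft f (x + S)) := by
  obtain ⟨hs1, hs2⟩ := mul_phiW_le hx
  have hx1 := hx.1
  have hx2 := hx.2
  have ht1 := hxT.1
  have ht2 := hxT.2
  have hh2 : 0 < h ^ 2 := by positivity
  have hs0 : 0 ≤ h * phiW x := mul_nonneg hh.le (Real.sqrt_nonneg _)
  have hc := zeroLeft_convexOn hf
  have hd := hc.symm_sum_le le_rfl hS.le (show x + S < 1 by linarith)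
  have hd' := hc.symm_sum_le le_rfl hs0 (show x + h * phiW x < 1 by linarith)
  rw [sub_zero, add_zero] at hd hd'
  rw [symmDelta_two_eq_zeroLeft hf hs0 (by linarith) (by linarith)]
  have hsS : h * phiW x ≤ S := by
    refine le_of_sq_le_sq ?_ hS.le
    have : phiW x ^ 2 = 1 - x ^ 2 := Real.sq_sqrt (by nlinarith)
    rw [mul_pow, this]
    have h3 : 1 - x ^ 2 ≤ 9 / 2 * T := by nlinarith
    nlinarith
  have hmain := hc.symm_sum_le hs0 hsS (show x + S < 1 by linarith)
  have hw0 : 0 ≤ jacobi β β x :=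
    mul_nonneg (Real.rpow_nonneg (by linarith) _) (Real.rpow_nonneg (by linarith) _)
  have hB : 0 ≤ 6 ^ |β| * T ^ β := by positivity
  rcases le_or_gt x (-1 / 2) with hle | hgt
  · rw [zeroLeft_of_nonpos f (by linarith : x - h * phiW x ≤ 0),
      zeroLeft_of_nonpos f (by linarith : x ≤ 0),
      zeroLeft_of_nonpos f (by linarith : x + h * phiW x ≤ 0)]
    rw [zeroLeft_of_nonpos f (by linarith : x ≤ 0)] at hd
    norm_num
    refine mul_nonneg hB (by linarith)
  have hw : jacobi β β x ≤ 6 ^ |β| * T ^ β := by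
    have e1 : (1 + x) ^ β ≤ 2 ^ |β| := by
      have := rpow_le_of_comparable (a := 1 + x) (b := 1) (L := 2) β (by linarith) one_pos
        (by linarith) (by linarith)
      rwa [Real.one_rpow, mul_one] at this
    have e2 : (1 - x) ^ β ≤ 3 ^ |β| * T ^ β :=
      rpow_le_of_comparable β (by linarith) hT (by linarith) (by linarith)
    calc jacobi β β x ≤ 2 ^ |β| * (3 ^ |β| * T ^ β) :=
          mul_le_mul e1 e2 (Real.rpow_nonneg (by linarith) _) (by positivity)
      _ = 6 ^ |β| * T ^ β := by
          rw [← mul_assoc, ← Real.mul_rpow (by norm_num) (by norm_num)]; norm_num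
  rw [Real.norm_of_nonneg (mul_nonneg hw0 (by linarith))]
  exact mul_le_mul hw (by linarith) (by linarith) hB

theorem lintegral_jacobi_mul_symmDelta_le {f : ℝ → ℝ} {β h S T p : ℝ}
    (hf : f ∈ MPlus 2 ∩ WSet ∞ β β) (hp : 1 < p) (hh : 0 < h) (hT : 0 < T) (hS : 0 < S)
    (hST : S ≤ 3 / 4 * T) (hhS : 9 / 2 * (h ^ 2 * T) ≤ S ^ 2) :
    ∫⁻ x in Icc (1 - 9 / 4 * T) (1 - T) ∩ Icc (-1 + 8 * h ^ 2) (1 - 8 * h ^ 2),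
      ‖jacobi β β x * symmDelta 2 (h * phiW x) f x‖ₑ ^ p ≤
    ENNReal.ofReal ((8 * 96 ^ |β| * (LpOn (fun x => jacobi β β x * f x) ∞ (-1) 1).toReal *
      (S / T)) ^ p * S) := by
  set M := (LpOn (fun x => jacobi β β x * f x) ∞ (-1) 1).toReal with hM
  have hM0 : 0 ≤ M := ENNReal.toReal_nonneg
  set g := zeroLeft f with hg
  set d : ℝ → ℝ := fun x => g (x - S) - 2 * g x + g (x + S) with hd
  set B := 6 ^ |β| * T ^ β with hB
  set E := 8 * (S / T) * g (1 - T / 8) with hE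
  have hB0 : 0 ≤ B := by positivity
  have hg0 : 0 ≤ g (1 - T / 8) := zeroLeft_nonneg hf.1 (by linarith)
  have hE0 : 0 ≤ E := by positivity
  have hc : ConvexOn ℝ (Iio 1) g := zeroLeft_convexOn hf.1
  have hm : MonotoneOn g (Iio 1) := zeroLeft_monotoneOn hf.1
  have hd0 : ∀ x ∈ Icc (1 - 9 / 4 * T) (1 - T), 0 ≤ d x := by
    intro x hx
    have := hc.symm_sum_le le_rfl hS.le (show x + S < 1 by linarith [hx.2])
    rw [sub_zero, add_zero] at this
    simp only [hd]; linarith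
  have hinc : ∀ x, x ≤ 1 - T → g (x + S) - g x ≤ E := fun x hx =>
    hc.sub_le_of_nonneg (fun y hy => zeroLeft_nonneg hf.1 hy) hS hT (by linarith)
  have hdE : ∀ x ∈ Icc (1 - 9 / 4 * T) (1 - T), d x ≤ E := by
    intro x hx
    have h1 := hinc x hx.2
    have h2 : g (x - S) ≤ g x := hm (show x - S < 1 by linarith [hx.2])
      (show x < 1 by linarith [hx.2]) (by linarith)
    simp only [hd]; linarith
  have hpt : ∀ x ∈ Icc (1 - 9 / 4 * T) (1 - T) ∩ Icc (-1 + 8 * h ^ 2) (1 - 8 * h ^ 2),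
      ‖jacobi β β x * symmDelta 2 (h * phiW x) f x‖ₑ ^ p ≤
        ENNReal.ofReal (B ^ p * E ^ (p - 1)) * ENNReal.ofReal (d x) := by
    intro x hx
    have h1 := norm_jacobi_mul_symmDelta_le (β := β) hf.1 hh hx.2 hT hS hST hhS hx.1
    have h0 := hd0 x hx.1
    rw [← ofReal_norm, ENNReal.ofReal_rpow_of_nonneg (norm_nonneg _) (by linarith),
      ← ENNReal.ofReal_mul (by positivity)]
    refine ENNReal.ofReal_le_ofReal ?_
    calc ‖jacobi β β x * symmDelta 2 (h * phiW x) f x‖ ^ p ≤ (B * d x) ^ p :=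
          Real.rpow_le_rpow (norm_nonneg _) h1 (by linarith)
      _ = B ^ p * (d x ^ (p - 1) * d x) := by
          rw [Real.mul_rpow hB0 h0, ← Real.rpow_add_one' h0 (by linarith), sub_add_cancel]
      _ ≤ B ^ p * (E ^ (p - 1) * d x) := by
          have := Real.rpow_le_rpow h0 (hdE x hx.1) (show 0 ≤ p - 1 by linarith)
          gcongr
      _ = _ := by ring
  have hle : 1 - 9 / 4 * T ≤ 1 - T := by linarith
  have hint : ∫⁻ x in Icc (1 - 9 / 4 * T) (1 - T), ENNReal.ofReal (d x) ≤
      ENNReal.ofReal (S * E) := by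
    have hi := intervalIntegrable_symm_diff hm hS.le hle (by linarith)
    rw [intervalIntegrable_iff_integrableOn_Icc_of_le hle] at hi
    rw [← ofReal_integral_eq_lintegral_ofReal hi (ae_restrict_of_forall_mem measurableSet_Icc hd0),
      integral_Icc_eq_integral_Ioc, ← intervalIntegral.integral_of_le hle]
    refine ENNReal.ofReal_le_ofReal ?_
    refine (integral_symm_diff_le hc hm hS hle (by linarith)).trans ?_
    exact mul_le_mul_of_nonneg_left (hinc _ le_rfl) hS.le
  have hBE : B * E ≤ 8 * 96 ^ |β| * M * (S / T) := by
    have e1 : T ^ β ≤ 8 ^ |β| * (T / 8) ^ β :=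
      rpow_le_of_comparable β hT (by linarith) (by linarith) (by linarith)
    have e2 := zeroLeft_mul_rpow_le hf (show 1 - T / 8 < 1 by linarith)
    rw [sub_sub_cancel, ← hM, ← hg] at e2
    have e3 : g (1 - T / 8) * T ^ β ≤ 8 ^ |β| * (2 ^ |β| * M) := by
      calc g (1 - T / 8) * T ^ β ≤ g (1 - T / 8) * (8 ^ |β| * (T / 8) ^ β) := by gcongr
        _ = 8 ^ |β| * (g (1 - T / 8) * (T / 8) ^ β) := by ring
        _ ≤ _ := by gcongr
    have e4 : (96 : ℝ) ^ |β| = 6 ^ |β| * (8 ^ |β| * 2 ^ |β|) := by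
      rw [← Real.mul_rpow (by norm_num) (by norm_num), ← Real.mul_rpow (by norm_num) (by norm_num)]
      norm_num
    calc B * E = 8 * 6 ^ |β| * (S / T) * (g (1 - T / 8) * T ^ β) := by rw [hB, hE]; ring
      _ ≤ 8 * 6 ^ |β| * (S / T) * (8 ^ |β| * (2 ^ |β| * M)) := by gcongr
      _ = _ := by rw [e4]; ring
  calc _ ≤ ∫⁻ x in Icc (1 - 9 / 4 * T) (1 - T) ∩ Icc (-1 + 8 * h ^ 2) (1 - 8 * h ^ 2),
          ENNReal.ofReal (B ^ p * E ^ (p - 1)) * ENNReal.ofReal (d x) :=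
        setLIntegral_mono' (measurableSet_Icc.inter measurableSet_Icc) hpt
    _ ≤ ∫⁻ x in Icc (1 - 9 / 4 * T) (1 - T),
          ENNReal.ofReal (B ^ p * E ^ (p - 1)) * ENNReal.ofReal (d x) :=
        lintegral_mono_set inter_subset_left
    _ = ENNReal.ofReal (B ^ p * E ^ (p - 1)) *
          ∫⁻ x in Icc (1 - 9 / 4 * T) (1 - T), ENNReal.ofReal (d x) :=
        lintegral_const_mul' _ _ ENNReal.ofReal_ne_top
    _ ≤ ENNReal.ofReal (B ^ p * E ^ (p - 1)) * ENNReal.ofReal (S * E) := by gcongr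
    _ = ENNReal.ofReal ((B * E) ^ p * S) := by
        rw [← ENNReal.ofReal_mul (by positivity), Real.mul_rpow hB0 hE0]
        congr 1
        have : E ^ p = E ^ (p - 1) * E := by
          rw [← Real.rpow_add_one' hE0 (by linarith), sub_add_cancel]
        rw [this]; ring
    _ ≤ _ := by
        refine ENNReal.ofReal_le_ofReal ?_
        gcongr

theorem lintegral_main_le {f : ℝ → ℝ} {β h p : ℝ}
    (hf : f ∈ MPlus 2 ∩ WSet ∞ β β) (hp : 1 < p) (hh : 0 < h) :
    ∫⁻ x in Icc (-1 + 8 * h ^ 2) (1 - 8 * h ^ 2),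
      ‖jacobi β β x * symmDelta 2 (h * phiW x) f x‖ₑ ^ p ≤
    ENNReal.ofReal ((8 * 96 ^ |β| * (LpOn (fun x => jacobi β β x * f x) ∞ (-1) 1).toReal) ^ p *
      (6 * h ^ 2 / (1 - (2 / 3) ^ (p - 1)))) := by
  set M := (LpOn (fun x => jacobi β β x * f x) ∞ (-1) 1).toReal with hM
  have hM0 : 0 ≤ M := ENNReal.toReal_nonneg
  set C := 8 * 96 ^ |β| * M with hC
  have hC0 : 0 ≤ C := by positivity
  set A := Icc (-1 + 8 * h ^ 2) (1 - 8 * h ^ 2) with hA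
  set T : ℕ → ℝ := fun j => 8 * h ^ 2 * (9 / 4) ^ j with hT
  set S : ℕ → ℝ := fun j => 6 * h ^ 2 * (3 / 2) ^ j with hS
  have hr : ∀ j : ℕ, ((9 : ℝ) / 4) ^ j = (3 / 2) ^ j * (3 / 2) ^ j := fun j => by
    rw [← mul_pow]; norm_num
  have hcover : A ⊆ ⋃ j, Icc (1 - 9 / 4 * T j) (1 - T j) ∩ A := by
    intro x hx
    have h8 : 0 < 8 * h ^ 2 := by positivity
    have h1 : 1 ≤ (1 - x) / (8 * h ^ 2) := by rw [one_le_div h8]; linarith [hx.2]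
    obtain ⟨j, hj1, hj2⟩ := exists_nat_pow_near h1 (show (1 : ℝ) < 9 / 4 by norm_num)
    rw [le_div_iff₀ h8] at hj1
    rw [div_lt_iff₀ h8, pow_succ] at hj2
    refine mem_iUnion.2 ⟨j, ⟨?_, ?_⟩, hx⟩ <;> simp only [hT] <;> linarith
  set ρ : ℝ := (2 / 3) ^ (p - 1) with hρ
  have hρ0 : 0 ≤ ρ := by positivity
  have hρ1 : ρ < 1 := Real.rpow_lt_one (by norm_num) (by norm_num) (by linarith)
  have hpiece : ∀ j, ∫⁻ x in Icc (1 - 9 / 4 * T j) (1 - T j) ∩ A,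
      ‖jacobi β β x * symmDelta 2 (h * phiW x) f x‖ₑ ^ p ≤
        ENNReal.ofReal (C ^ p * (6 * h ^ 2) * ρ ^ j) := by
    intro j
    have hq : (1 : ℝ) ≤ (3 / 2) ^ j := one_le_pow₀ (by norm_num)
    refine (lintegral_jacobi_mul_symmDelta_le (S := S j) hf hp hh (by positivity) (by positivity)
      ?_ ?_).trans (ENNReal.ofReal_le_ofReal ?_)
    · simp only [hS, hT, hr]
      have : h ^ 2 * (3 / 2) ^ j ≤ h ^ 2 * ((3 / 2) ^ j * (3 / 2) ^ j) := by
        gcongr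
        exact le_mul_of_one_le_left (by positivity) hq
      linarith
    · simp only [hS, hT, hr]
      apply le_of_eq; ring
    · have hpos : (0 : ℝ) < (3 / 2) ^ j := by positivity
      have e1 : S j / T j = 3 / 4 * (2 / 3) ^ j := by
        have : ((2 : ℝ) / 3) ^ j = ((3 / 2) ^ j)⁻¹ := by rw [← inv_pow]; norm_num
        simp only [hS, hT, hr, this]
        field_simp
        norm_num
      have e2 : (((2 : ℝ) / 3) ^ j) ^ p * (3 / 2) ^ j = ρ ^ j := by
        have : ((3 : ℝ) / 2) ^ j = (((2 : ℝ) / 3) ^ j) ^ (-1 : ℝ) := by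
          rw [Real.rpow_neg_one, ← inv_pow]; norm_num
        rw [this, ← Real.rpow_add (by positivity), hρ, ← Real.rpow_natCast, ← Real.rpow_natCast,
          ← Real.rpow_mul (by norm_num), ← Real.rpow_mul (by norm_num)]
        congr 1; ring
      have e3 : ((3 : ℝ) / 4) ^ p ≤ 1 := Real.rpow_le_one (by norm_num) (by norm_num) (by linarith)
      have e4 : (3 / 4 * ((2 : ℝ) / 3) ^ j) ^ p = (3 / 4) ^ p * (((2 : ℝ) / 3) ^ j) ^ p :=
        Real.mul_rpow (by norm_num) (by positivity)
      rw [← hM, ← hC, e1, Real.mul_rpow hC0 (by positivity), e4]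
      calc C ^ p * ((3 / 4) ^ p * (((2 : ℝ) / 3) ^ j) ^ p) * S j
          = (3 / 4) ^ p * (C ^ p * (6 * h ^ 2) * ((((2 : ℝ) / 3) ^ j) ^ p * (3 / 2) ^ j)) := by
            simp only [hS]; ring
        _ = (3 / 4) ^ p * (C ^ p * (6 * h ^ 2) * ρ ^ j) := by rw [e2]
        _ ≤ _ := mul_le_of_le_one_left (by positivity) e3
  calc _ ≤ ∫⁻ x in ⋃ j, Icc (1 - 9 / 4 * T j) (1 - T j) ∩ A,
          ‖jacobi β β x * symmDelta 2 (h * phiW x) f x‖ₑ ^ p := lintegral_mono_set hcover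
    _ ≤ ∑' j, ∫⁻ x in Icc (1 - 9 / 4 * T j) (1 - T j) ∩ A,
          ‖jacobi β β x * symmDelta 2 (h * phiW x) f x‖ₑ ^ p := lintegral_iUnion_le _ _
    _ ≤ ∑' j, ENNReal.ofReal (C ^ p * (6 * h ^ 2) * ρ ^ j) := ENNReal.tsum_le_tsum hpiece
    _ = ENNReal.ofReal (∑' j, C ^ p * (6 * h ^ 2) * ρ ^ j) :=
        (ENNReal.ofReal_tsum_of_nonneg (fun j => by positivity)
          ((summable_geometric_of_lt_one hρ0 hρ1).mul_left _)).symm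
    _ = _ := by
        rw [tsum_mul_left, tsum_geometric_of_lt_one hρ0 hρ1, div_eq_mul_inv]
        congr 1; ring

theorem OmegaMain_two_le {f : ℝ → ℝ} {β δ : ℝ} {q : ℝ≥0∞} (hf : f ∈ MPlus 2 ∩ WSet ∞ β β)
    (hq1 : 1 < q) (hq2 : q < ∞) :
    OmegaMain 2 f δ (jacobi β β) q ≤ ENNReal.ofReal (8 * 96 ^ |β| *
      (6 / (1 - (2 / 3) ^ (q.toReal - 1))) ^ q.toReal⁻¹ * δ ^ (2 / q.toReal) *
        (LpOn (fun x => jacobi β β x * f x) ∞ (-1) 1).toReal) := by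
  set M := (LpOn (fun x => jacobi β β x * f x) ∞ (-1) 1).toReal with hM
  have hM0 : 0 ≤ M := ENNReal.toReal_nonneg
  have hp : 1 < q.toReal := by
    rw [← ENNReal.toReal_one]; exact ENNReal.toReal_strict_mono hq2.ne hq1
  set p := q.toReal with hpdef
  have hρ1 : ((2 : ℝ) / 3) ^ (p - 1) < 1 :=
    Real.rpow_lt_one (by norm_num) (by norm_num) (by linarith)
  have hρ : 0 < 1 - ((2 : ℝ) / 3) ^ (p - 1) := by linarith
  refine iSup₂_le fun h hh => ?_
  push_cast
  rw [show (2 : ℝ) * 2 ^ 2 * h ^ 2 = 8 * h ^ 2 by ring, LpOn,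
    eLpNorm_eq_lintegral_rpow_enorm_toReal (zero_lt_one.trans hq1).ne' hq2.ne, ← hpdef, one_div]
  have hh0 := hh.1
  refine (ENNReal.rpow_le_rpow (lintegral_main_le hf hp hh0) (by positivity)).trans ?_
  rw [ENNReal.ofReal_rpow_of_nonneg (by positivity) (by positivity)]
  refine ENNReal.ofReal_le_ofReal ?_
  rw [Real.mul_rpow (by positivity) (by positivity),
    Real.rpow_rpow_inv (by positivity) (by linarith), mul_div_right_comm,
    Real.mul_rpow (by positivity) (by positivity), ← Real.rpow_natCast h 2,
    ← Real.rpow_mul hh0.le, ← div_eq_mul_inv, ← hM]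
  have hd : h ^ (((2 : ℕ) : ℝ) / p) ≤ δ ^ (2 / p) := by
    push_cast
    exact Real.rpow_le_rpow hh0.le hh.2 (by positivity)
  calc _ ≤ 8 * 96 ^ |β| * M * ((6 / (1 - (2 / 3) ^ (p - 1))) ^ p⁻¹ * δ ^ (2 / p)) := by gcongr
    _ = _ := by ring

theorem statement17 (β : ℝ) (q : ℝ≥0∞) (hq1 : 1 < q) (hq2 : q < ∞) :
    ∃ c > (0 : ℝ), ∀ f : ℝ → ℝ, f ∈ MPlus 2 ∩ WSet ∞ β β → ∀ δ : ℝ, 0 < δ → δ ≤ 1 / 4 →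
      omegaDT 2 f δ (jacobi β β) q ≤
        ENNReal.ofReal (c * δ ^ (2 / q.toReal)) *
          LpOn (fun x => jacobi β β x * f x) ∞ (-1) 1 := by
  have hp : 1 < q.toReal := by
    rw [← ENNReal.toReal_one]; exact ENNReal.toReal_strict_mono hq2.ne hq1
  have hρ1 : ((2 : ℝ) / 3) ^ (q.toReal - 1) < 1 :=
    Real.rpow_lt_one (by norm_num) (by norm_num) (by linarith)
  have hρ : 0 < 1 - ((2 : ℝ) / 3) ^ (q.toReal - 1) := by linarith
  set K : ℝ := 8 * 96 ^ |β| * (6 / (1 - (2 / 3) ^ (q.toReal - 1))) ^ q.toReal⁻¹ with hK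
  have hK0 : 0 < K := by positivity
  refine ⟨K + 8 ^ q.toReal⁻¹ * 16 ^ |β| + 8 ^ q.toReal⁻¹, by positivity, ?_⟩
  intro f hf δ hδ hδ'
  have hmain := OmegaMain_two_le (δ := δ) hf hq1 hq2
  have hfwd := OmegaFwd_two_le q hf hδ hδ'
  have hbwd := OmegaBwd_two_le q hf hδ hδ'
  have hN : LpOn (fun x => jacobi β β x * f x) ∞ (-1) 1 =
      ENNReal.ofReal (LpOn (fun x => jacobi β β x * f x) ∞ (-1) 1).toReal :=
    (ENNReal.ofReal_toReal hf.2.2.ne).symm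
  rw [hN]
  set M := (LpOn (fun x => jacobi β β x * f x) ∞ (-1) 1).toReal with hM
  have hM0 : 0 ≤ M := ENNReal.toReal_nonneg
  have hpow : ENNReal.ofReal (8 * δ ^ 2) ^ q.toReal⁻¹ =
      ENNReal.ofReal (8 ^ q.toReal⁻¹ * δ ^ (2 / q.toReal)) := by
    rw [ENNReal.ofReal_rpow_of_nonneg (by positivity) (by positivity),
      Real.mul_rpow (by norm_num) (by positivity), ← Real.rpow_natCast δ 2,
      ← Real.rpow_mul hδ.le, ← div_eq_mul_inv]
    push_cast
    rfl
  rw [hpow, ← ENNReal.ofReal_mul (by positivity)] at hfwd hbwd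
  calc omegaDT 2 f δ (jacobi β β) q ≤ _ := add_le_add (add_le_add hmain hfwd) hbwd
    _ = _ := by
      rw [← ENNReal.ofReal_add (by positivity) (by positivity),
        ← ENNReal.ofReal_add (by positivity) (by positivity), ← ENNReal.ofReal_mul (by positivity)]
      congr 1
      ring
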